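/- Let L be a recursive schedule. Then for every b ∈ B and every scan (c,t) ∈ L with t ≤ b·|C| − 1, the configuration (c, b, t mod b) has discovery time exactly t, i.e., T_{(c,b,t mod b)}(L) = t. -/

import Mathlib

open scoped Classical

/-- A listening schedule over channel set `C`: a set of (channel, time-slot) pairs
such that all scanned channels belong to `C` and at most one channel is scanned
per time slot. -/
def IsSchedule (C : Finset ℕ) (L : Set (ℕ × ℕ)) : Prop :=
  (∀ p ∈ L, p.1 ∈ C) ∧ ∀ c c' t : ℕ, (c, t) ∈ L → (c', t) ∈ L → c = c'

/-- Configuration `(c, b, δ)` is discovered at time slot `t` by the schedule `L`. -/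
def DiscoveredAt (L : Set (ℕ × ℕ)) (c b δ t : ℕ) : Prop :=
  (c, t) ∈ L ∧ t % b = δ

/-- The discovery time `T_κ(L)` of configuration `κ = (c, b, δ)`: the least time slot
at which it is discovered (junk value `0` if it is never discovered). -/
noncomputable def discTime (L : Set (ℕ × ℕ)) (c b δ : ℕ) : ℕ :=
  sInf {t | DiscoveredAt L c b δ t}

/-- A schedule is complete if every configuration in `K_BC` is discovered at some slot. -/
def Complete (C B : Finset ℕ) (L : Set (ℕ × ℕ)) : Prop :=
  ∀ c ∈ C, ∀ b ∈ B, ∀ δ < b, ∃ t, DiscoveredAt L c b δ t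

/-- The set of all configurations `K_BC`, as a finite set of triples `(c, b, δ)`. -/
def KBC (C B : Finset ℕ) : Finset (ℕ × ℕ × ℕ) :=
  (C ×ˢ B ×ˢ Finset.range (B.sup id)).filter fun κ => κ.2.2 < κ.2.1

/-- The weight `P_κ = 1/(b·|B|·|C|)` of a configuration with beacon period `b`. -/
noncomputable def weight (C B : Finset ℕ) (b : ℕ) : ℝ :=
  (1 : ℝ) / ((b : ℝ) * (B.card : ℝ) * (C.card : ℝ))

/-- Total weight of configurations discovered by `L` at some slot `≤ t` (the NDoT curve). -/
noncomputable def discSum (C B : Finset ℕ) (L : Set (ℕ × ℕ)) (t : ℕ) : ℝ :=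
  ∑ κ ∈ (KBC C B).filter (fun κ => ∃ t' ≤ t, DiscoveredAt L κ.1 κ.2.1 κ.2.2 t'),
    weight C B κ.2.1

/-- The mean discovery time `MDT(L) = Σ_{κ ∈ K_BC} P_κ · T_κ(L)`. -/
noncomputable def MDT (C B : Finset ℕ) (L : Set (ℕ × ℕ)) : ℝ :=
  ∑ κ ∈ KBC C B, weight C B κ.2.1 * (discTime L κ.1 κ.2.1 κ.2.2 : ℝ)

/-- A schedule is recursive if it is complete and, for every `b ∈ B`, every
configuration with beacon period `b` has discovery time at most `b·|C| - 1`. -/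
def Recursive (C B : Finset ℕ) (L : Set (ℕ × ℕ)) : Prop :=
  Complete C B L ∧
  ∀ c ∈ C, ∀ b ∈ B, ∀ δ < b, discTime L c b δ ≤ b * C.card - 1

/-- `D(c,t)`: the expected number of new discoveries when scanning channel `c` at slot `t`,
i.e. the sum of weights of configurations `(c, b, t mod b)`, `b ∈ B`, not yet
discovered by `L` before slot `t`. -/
noncomputable def gain (C B : Finset ℕ) (L : Set (ℕ × ℕ)) (c t : ℕ) : ℝ :=
  ∑ b ∈ B.filter (fun b => ¬ ∃ t' < t, DiscoveredAt L c b (t % b) t'),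
    weight C B b

/-- A schedule is greedy if, whenever some channel has positive expected gain at slot `t`,
it scans a channel maximizing the expected gain at slot `t`. -/
def Greedy (C B : Finset ℕ) (L : Set (ℕ × ℕ)) : Prop :=
  IsSchedule C L ∧
  ∀ t : ℕ, (∃ c ∈ C, 0 < gain C B L c t) →
    ∃ c ∈ C, (c, t) ∈ L ∧ ∀ c' ∈ C, gain C B L c' t ≤ gain C B L c t

/-!
Fix a beacon period `b`. Distinct configurations with period `b` are discovered in distinct slots,
since a slot determines both the scanned channel and the offset. In a recursive schedule the
`b * |C|` configurations with period `b` are all discovered during the first `b * |C|` slots, so by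
pigeonhole each of these slots is the discovery time of some configuration with period `b`. The
only configuration with period `b` that a scan `(c, t)` can discover is `(c, b, t % b)`.
-/

section

variable {C B : Finset ℕ} {L : Set (ℕ × ℕ)} {b c c' δ δ' t : ℕ}

theorem discoveredAt_discTime (h : ∃ t, DiscoveredAt L c b δ t) :
    DiscoveredAt L c b δ (discTime L c b δ) :=
  Nat.sInf_mem h

theorem IsSchedule.eq_of_discoveredAt (hL : IsSchedule C L) (h : DiscoveredAt L c b δ t)
    (h' : DiscoveredAt L c' b δ' t) : c = c' ∧ δ = δ' :=
  ⟨hL.2 c c' t h.1 h'.1, h.2.symm.trans h'.2⟩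

theorem Complete.injOn_discTime (hcomp : Complete C B L) (hL : IsSchedule C L) (hb : b ∈ B) :
    Set.InjOn (fun p : ℕ × ℕ => discTime L p.1 b p.2) ↑(C ×ˢ Finset.range b) := by
  have discovered {p : ℕ × ℕ} (hp : p ∈ C ×ˢ Finset.range b) :
      DiscoveredAt L p.1 b p.2 (discTime L p.1 b p.2) := by
    obtain ⟨hc, hδ⟩ := Finset.mem_product.mp hp
    exact discoveredAt_discTime (hcomp _ hc b hb _ (Finset.mem_range.mp hδ))
  intro p hp q hq (hpq : discTime L p.1 b p.2 = discTime L q.1 b q.2)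
  have hq_at : DiscoveredAt L q.1 b q.2 (discTime L p.1 b p.2) := hpq ▸ discovered hq
  exact Prod.ext_iff.mpr (hL.eq_of_discoveredAt (discovered hp) hq_at)

theorem Recursive.discTime_lt (hrec : Recursive C B L) (hc : c ∈ C) (hb : b ∈ B) (hδ : δ < b) :
    discTime L c b δ < b * C.card := by
  have slots_pos : 0 < b * C.card :=
    Nat.mul_pos (Nat.zero_lt_of_lt hδ) (Finset.card_pos.mpr ⟨c, hc⟩)
  exact Nat.lt_of_le_pred slots_pos (hrec.2 c hc b hb δ hδ)

theorem Recursive.surjOn_discTime (hrec : Recursive C B L) (hL : IsSchedule C L) (hb : b ∈ B) :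
    Set.SurjOn (fun p : ℕ × ℕ => discTime L p.1 b p.2)
      ↑(C ×ˢ Finset.range b) ↑(Finset.range (b * C.card)) := by
  refine Finset.surjOn_of_injOn_of_card_le _ ?mapsTo (hrec.1.injOn_discTime hL hb) ?card
  case mapsTo =>
    intro p hp
    obtain ⟨hc, hδ⟩ := Finset.mem_product.mp hp
    exact Finset.mem_range.mpr (hrec.discTime_lt hc hb (Finset.mem_range.mp hδ))
  case card =>
    rw [Finset.card_product, Finset.card_range, Finset.card_range, Nat.mul_comm]

theorem Recursive.exists_discTime_eq (hrec : Recursive C B L) (hL : IsSchedule C L) (hb : b ∈ B)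
    (ht : t < b * C.card) : ∃ c ∈ C, ∃ δ < b, discTime L c b δ = t := by
  have ht_mem : t ∈ Finset.range (b * C.card) := Finset.mem_range.mpr ht
  obtain ⟨⟨c, δ⟩, hp, hdisc⟩ := hrec.surjOn_discTime hL hb ht_mem
  obtain ⟨hc, hδ⟩ := Finset.mem_product.mp hp
  exact ⟨c, hc, δ, Finset.mem_range.mp hδ, hdisc⟩

end

/-- for a recursive schedule `L`, every scan `(c,t) ∈ L` with
`t ≤ b·|C| − 1` results in the discovery of configuration `(c, b, t mod b)`
exactly at slot `t`, for every `b ∈ B`. -/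
theorem stmt4 (C B : Finset ℕ) (hC : C.Nonempty) (hB : B.Nonempty)
    (hBpos : ∀ b ∈ B, 0 < b)
    (L : Set (ℕ × ℕ)) (hL : IsSchedule C L) (hrec : Recursive C B L)
    (b : ℕ) (hb : b ∈ B) (c t : ℕ) (hct : (c, t) ∈ L)
    (ht : t ≤ b * C.card - 1) :
    discTime L c b (t % b) = t := by
  have slots_pos : 0 < b * C.card := Nat.mul_pos (hBpos b hb) hC.card_pos
  have ht_lt : t < b * C.card := Nat.lt_of_le_pred slots_pos ht
  obtain ⟨c', hc', δ, hδ, hdisc⟩ := hrec.exists_discTime_eq hL hb ht_lt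
  have discovered : DiscoveredAt L c' b δ t :=
    hdisc ▸ discoveredAt_discTime (hrec.1 c' hc' b hb δ hδ)
  obtain ⟨rfl, rfl⟩ := hL.eq_of_discoveredAt discovered ⟨hct, rfl⟩
  exact hdisc
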